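/- Monotonicity of reach under changing front-car acceleration: if the front car has position x_l, velocity v_l ≥ 0 and uses any acceleration a ≥ B_max during time t ≥ 0 (velocity clamped below at 0), then its position at time t is at least the position it would have had braking at B_max for time t (also clamped). Hence the worst case for a rear car is the front car braking at maximum force B_max. -/

import Mathlib

/-- Position under constant acceleration `c`, velocity clamped below at 0. -/
noncomputable def clampPos (x v c t : ℝ) : ℝ :=
  if 0 ≤ v + c * t then x + v * t + (c / 2) * t ^ 2 else x - v ^ 2 / (2 * c)

/-- Monotonicity of reach: braking at maximum force `B_max` is the worst case
(minimal position) for the front car. -/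
theorem front_car_worst_case (x v a Bmax t : ℝ)
    (hBmax : Bmax < 0) (ha : a ≥ Bmax) (hv : 0 ≤ v) (ht : 0 ≤ t) :
    clampPos x v Bmax t ≤ clampPos x v a t := by
  have hat : Bmax * t ≤ a * t := mul_le_mul_of_nonneg_right ha ht
  unfold clampPos
  split_ifs with h1 h2 h2
  · nlinarith [mul_le_mul_of_nonneg_right hat ht]
  · exact absurd (by linarith) h2
  · have hB : v ^ 2 / (2 * (-Bmax)) ≤ v * t / 2 := by
      rw [div_le_iff₀ (by linarith)]
      nlinarith [mul_nonneg hv (by linarith : 0 ≤ -(v + Bmax * t))]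
    have e : v ^ 2 / (2 * Bmax) = -(v ^ 2 / (2 * (-Bmax))) := by
      rw [mul_neg, div_neg, neg_neg]
    rw [e]
    nlinarith [mul_nonneg ht h2]
  · have ha0 : a < 0 := by
      by_contra hc
      exact h2 (by nlinarith [mul_nonneg (not_lt.mp hc) ht])
    have hB : v ^ 2 / (2 * (-Bmax)) ≤ v ^ 2 / (2 * (-a)) :=
      div_le_div_of_nonneg_left (sq_nonneg v) (by linarith) (by linarith)
    rw [mul_neg, div_neg, mul_neg, div_neg] at hB
    linarith
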